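/- Fix a real number c with 0 ≤ c < 1. The function f(ξ) = (27ξ² + 10cξ + 3c² − 40)/(8√(1−c²)) is strictly increasing on the interval I = (ξ_min, ξ_max), and f maps I into J = (η_min, η_max); in particular, if ξ∨ ∈ I is the zero of g₁ in I and η∨ = f(ξ∨), then η∨ ∈ J. -/

import Mathlib

noncomputable def g1 (c ξ : ℝ) : ℝ :=
  2187*ξ^3 + 3807*c*ξ^2 + (1953*c^2 - 3840)*ξ + 245*c^3 - 4352*c

noncomputable def ximin (c : ℝ) : ℝ := (-5*c + 8*Real.sqrt 2*Real.sqrt (9 - c^2))/27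

noncomputable def ximax (c : ℝ) : ℝ := (4 - c)/3

noncomputable def etamin (c : ℝ) : ℝ := Real.sqrt (1 - c^2)/3

noncomputable def etamax (c : ℝ) : ℝ := ((3 - c)/(1 + c))*(Real.sqrt (1 - c^2)/3)

noncomputable def f (c ξ : ℝ) : ℝ := (27*ξ^2 + 10*c*ξ + 3*c^2 - 40)/(8*Real.sqrt (1 - c^2))

/-- `f` is strictly increasing on `I = (ξ_min, ξ_max)` and maps `I` into `J = (η_min, η_max)`;
in particular the zero `ξ∨` of `g₁` in `I` satisfies `η∨ = f(ξ∨) ∈ J`. -/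
theorem stmt_12 (c : ℝ) (hc0 : 0 ≤ c) (hc1 : c < 1) :
    StrictMonoOn (f c) (Set.Ioo (ximin c) (ximax c)) ∧
    Set.MapsTo (f c) (Set.Ioo (ximin c) (ximax c)) (Set.Ioo (etamin c) (etamax c)) ∧
    ∀ ξ ∈ Set.Ioo (ximin c) (ximax c), g1 c ξ = 0 →
      f c ξ ∈ Set.Ioo (etamin c) (etamax c) := by
  have hs2 : 0 < 1 - c^2 := by nlinarith
  have hs : 0 < Real.sqrt (1 - c^2) := Real.sqrt_pos.mpr hs2
  have hss : Real.sqrt (1 - c^2) * Real.sqrt (1 - c^2) = 1 - c^2 := Real.mul_self_sqrt hs2.le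
  have hr : (8*Real.sqrt 2*Real.sqrt (9 - c^2))^2 = 128*(9 - c^2) := by
    rw [mul_pow, mul_pow, Real.sq_sqrt (by norm_num), Real.sq_sqrt (by nlinarith)]
    ring
  have hr0 : 0 ≤ 8*Real.sqrt 2*Real.sqrt (9 - c^2) := by positivity
  have hlow : ∀ ξ, ximin c < ξ → 8*Real.sqrt 2*Real.sqrt (9 - c^2) < 27*ξ + 5*c := by
    intro ξ h
    unfold ximin at h
    linarith
  have hmap : Set.MapsTo (f c) (Set.Ioo (ximin c) (ximax c)) (Set.Ioo (etamin c) (etamax c)) := by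
    rintro ξ ⟨h1, h2⟩
    have h3 := hlow ξ h1
    unfold ximax at h2
    have h4 : 128*(9 - c^2) < (27*ξ + 5*c)^2 := by
      rw [← hr]
      exact pow_lt_pow_left₀ h3 hr0 (by norm_num)
    have h5 : (27*ξ + 5*c)^2 < (36 - 4*c)^2 :=
      pow_lt_pow_left₀ (by linarith) (by linarith) (by norm_num)
    constructor
    · unfold etamin f
      rw [lt_div_iff₀ (by positivity)]
      nlinarith
    · have he : etamax c = (3 - c)*(1 - c)/(3*Real.sqrt (1 - c^2)) := by
        unfold etamax
        have : (1 + c) ≠ 0 := by positivity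
        field_simp
        nlinarith
      rw [he]
      unfold f
      rw [div_lt_div_iff₀ (by positivity) (by positivity)]
      have h6 : 3*(27*ξ^2 + 10*c*ξ + 3*c^2 - 40) < 8*((3 - c)*(1 - c)) := by nlinarith
      nlinarith
  refine ⟨?_, hmap, fun ξ hξ _ => hmap hξ⟩
  rintro x ⟨hx, _⟩ y ⟨_, _⟩ hxy
  have h3 := hlow x hx
  unfold f
  apply div_lt_div_of_pos_right _ (by positivity)
  have := pow_lt_pow_left₀ (show 27*x + 5*c < 27*y + 5*c by linarith) (by linarith) two_ne_zero
  nlinarith
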